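/- Let q > 1 be a real number and i ≤ φ ≤ Λ natural numbers. Then Σ_{ℓ=0}^{i} [i; ℓ] [Λ−i; φ−ℓ] q^{2ℓ(Λ−φ)} (−1)^ℓ q^{ℓ(ℓ−1)} γ(2(φ−ℓ), i−ℓ) = (−1)^i q^{i(i−1)} [Λ−i; Λ−φ]. -/

import Mathlib

/-- The skew-q-nary Gaussian coefficient `[x;k]` for real `x`. -/
noncomputable def gaussQ (q x : ℝ) (k : ℕ) : ℝ :=
  ∏ i ∈ Finset.range k, (q ^ (2 * x) - q ^ (2 * (i : ℝ))) / (q ^ (2 * (k : ℝ)) - q ^ (2 * (i : ℝ)))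

/-- The skew-q-nary Gamma function `γ(x,k)`. -/
noncomputable def skewGamma (q x : ℝ) (k : ℕ) : ℝ :=
  ∏ i ∈ Finset.range k, (q ^ x - q ^ (2 * (i : ℝ)))

/-!
Write `p = q ^ 2` and `P_n(x, y) = (x - y)(x - p y) ⋯ (x - p ^ (n - 1) y)`. Put `a = φ - i`,
`b = Λ - φ` and `k = i - ℓ`. Since `γ(2(a + k), k) = P_k(p ^ (a + k), 1)`, the `q`-analogue of
trinomial revision turns `[a + b; a + k] γ(2(a + k), k)` into `[a + b; a] P_k(p ^ b, 1)`. What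
remains of the sum is the Goldman–Rota convolution
`∑ [i; ℓ] P_ℓ(x, y) P_{i - ℓ}(y, z) = P_i(x, z)` at `(x, y, z) = (0, p ^ b, 1)`.
-/

open Finset

section CommRing

variable {R : Type*} [CommRing R] (p : R)

/-- The Gaussian binomial coefficient with base `p`. It is defined by the Pascal recurrence rather
than as a quotient, so that its identities hold in every commutative ring; `gaussQ_natCast`
recovers the quotient. -/
def gaussBinom : ℕ → ℕ → R
  | _, 0 => 1
  | 0, _ + 1 => 0
  | n + 1, k + 1 => p ^ (k + 1) * gaussBinom n (k + 1) + gaussBinom n k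

/-- The `p`-analogue `(x - y)(x - p y) ⋯ (x - p ^ (n - 1) y)` of the power `(x - y) ^ n`.
At `y = 1` it covers both `γ` and the numerator and denominator of a Gaussian coefficient. -/
def qSubPow (n : ℕ) (x y : R) : R :=
  ∏ j ∈ range n, (x - p ^ j * y)

@[simp]
theorem gaussBinom_zero_right (n : ℕ) : gaussBinom p n 0 = 1 := by
  cases n <;> rfl

theorem gaussBinom_succ_succ (n k : ℕ) :
    gaussBinom p (n + 1) (k + 1) = p ^ (k + 1) * gaussBinom p n (k + 1) + gaussBinom p n k :=
  rfl

theorem gaussBinom_eq_zero_of_lt : ∀ {n k : ℕ}, n < k → gaussBinom p n k = 0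
  | _, 0, h => absurd h (Nat.not_lt_zero _)
  | 0, _ + 1, _ => rfl
  | n + 1, k + 1, h => by
    have hnk : n < k := Nat.lt_of_succ_lt_succ h
    rw [gaussBinom_succ_succ, gaussBinom_eq_zero_of_lt hnk,
      gaussBinom_eq_zero_of_lt (hnk.trans k.lt_succ_self), mul_zero, add_zero]

theorem gaussBinom_add_succ_mul_pow_sub_one : ∀ k m : ℕ,
    gaussBinom p (k + m) (k + 1) * (p ^ (k + 1) - 1) = gaussBinom p (k + m) k * (p ^ m - 1)
  | k, 0 => by simp [gaussBinom_eq_zero_of_lt]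
  | 0, m + 1 => by
    have ih := gaussBinom_add_succ_mul_pow_sub_one 0 m
    rw [← add_assoc, gaussBinom_succ_succ]
    simp only [gaussBinom_zero_right] at ih ⊢
    linear_combination p * ih
  | k + 1, m + 1 => by
    have ih₁ := gaussBinom_add_succ_mul_pow_sub_one (k + 1) m
    have ih₂ := gaussBinom_add_succ_mul_pow_sub_one k (m + 1)
    rw [← add_assoc, add_right_comm] at ih₂
    rw [← add_assoc, gaussBinom_succ_succ, gaussBinom_succ_succ]
    linear_combination p ^ (k + 2) * ih₁ + ih₂

theorem gaussBinom_add_succ_succ (k m : ℕ) :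
    gaussBinom p (k + m + 1) (k + 1) =
      gaussBinom p (k + m) (k + 1) + p ^ m * gaussBinom p (k + m) k := by
  rw [gaussBinom_succ_succ]
  linear_combination gaussBinom_add_succ_mul_pow_sub_one p k m

theorem gaussBinom_self : ∀ n : ℕ, gaussBinom p n n = 1
  | 0 => rfl
  | n + 1 => by
    rw [gaussBinom_succ_succ, gaussBinom_self n, gaussBinom_eq_zero_of_lt p n.lt_succ_self,
      mul_zero, zero_add]

theorem gaussBinom_symm_add : ∀ a b : ℕ, gaussBinom p (a + b) a = gaussBinom p (a + b) b
  | 0, b => by rw [zero_add, gaussBinom_zero_right, gaussBinom_self]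
  | a + 1, 0 => by rw [add_zero, gaussBinom_zero_right, gaussBinom_self]
  | a + 1, b + 1 => by
    have ih₁ := gaussBinom_symm_add (a + 1) b
    have ih₂ := gaussBinom_symm_add a (b + 1)
    have pascal := gaussBinom_add_succ_succ p b (a + 1)
    rw [← add_assoc, add_right_comm] at ih₂
    rw [add_comm b (a + 1)] at pascal
    rw [← add_assoc, pascal, gaussBinom_succ_succ, ih₁, ih₂, add_comm]

@[simp]
theorem qSubPow_zero (x y : R) : qSubPow p 0 x y = 1 :=
  prod_range_zero _

theorem qSubPow_succ (n : ℕ) (x y : R) :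
    qSubPow p (n + 1) x y = qSubPow p n x y * (x - p ^ n * y) :=
  prod_range_succ _ _

theorem qSubPow_succ_mul_left (n : ℕ) (x y : R) :
    qSubPow p (n + 1) (p * x) y = (p * x - y) * p ^ n * qSubPow p n x y := by
  have factor (j : ℕ) : p * x - p ^ (j + 1) * y = p * (x - p ^ j * y) := by ring
  simp only [qSubPow, prod_range_succ', factor, prod_mul_distrib, prod_const, card_range,
    pow_zero, one_mul]
  ring

theorem qSubPow_zero_left (n : ℕ) (y : R) :
    qSubPow p n 0 y = (-y) ^ n * p ^ n.choose 2 := by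
  induction n with
  | zero => simp
  | succ n ih =>
    rw [qSubPow_succ, ih, Nat.choose_succ_succ' n 1, Nat.choose_one_right]
    ring

theorem qSubPow_pow_one_eq_zero {n k : ℕ} (h : n < k) : qSubPow p k (p ^ n) 1 = 0 :=
  prod_eq_zero (mem_range.2 h) (by rw [mul_one, sub_self])

theorem qSubPow_pow_one_ne_zero [NoZeroDivisors R] [Nontrivial R]
    (hp : Function.Injective fun n : ℕ => p ^ n) {n k : ℕ} (h : k ≤ n) :
    qSubPow p k (p ^ n) 1 ≠ 0 := by
  refine prod_ne_zero_iff.2 fun j hj => ?_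
  rw [mul_one, sub_ne_zero]
  exact hp.ne ((mem_range.1 hj).trans_le h).ne'

theorem gaussBinom_mul_qSubPow (a b k : ℕ) :
    gaussBinom p (a + b) (a + k) * qSubPow p k (p ^ (a + k)) 1 =
      gaussBinom p (a + b) a * qSubPow p k (p ^ b) 1 := by
  rcases lt_or_ge b k with hbk | hkb
  · rw [gaussBinom_eq_zero_of_lt p (Nat.add_lt_add_left hbk a), qSubPow_pow_one_eq_zero p hbk,
      zero_mul, mul_zero]
  induction k with
  | zero => simp
  | succ k ih =>
    obtain ⟨c, rfl⟩ := Nat.exists_eq_add_of_le hkb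
    have absorb := gaussBinom_add_succ_mul_pow_sub_one p (a + k) (c + 1)
    rw [show a + k + (c + 1) = a + (k + 1 + c) by ring] at absorb
    rw [← add_assoc a k 1, pow_succ' p (a + k), qSubPow_succ_mul_left, qSubPow_succ]
    linear_combination p ^ k * qSubPow p k (p ^ (a + k)) 1 * absorb +
      (p ^ (c + 1) - 1) * p ^ k * ih (by omega)

theorem gaussBinom_mul_qSubPow_self (n k : ℕ) :
    gaussBinom p n k * qSubPow p k (p ^ k) 1 = qSubPow p k (p ^ n) 1 := by
  simpa using gaussBinom_mul_qSubPow p 0 n k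

theorem sum_antidiagonal_gaussBinom_succ_mul (f : ℕ → ℕ → R) (n : ℕ) :
    ∑ kl ∈ antidiagonal (n + 1), gaussBinom p (n + 1) kl.1 * f kl.1 kl.2 =
      ∑ kl ∈ antidiagonal n,
        gaussBinom p n kl.1 * (f (kl.1 + 1) kl.2 + p ^ kl.1 * f kl.1 (kl.2 + 1)) := by
  have shift : ∑ kl ∈ antidiagonal n, p ^ kl.1 * gaussBinom p n kl.1 * f kl.1 (kl.2 + 1) =
      f 0 (n + 1) + ∑ kl ∈ antidiagonal n,
        p ^ (kl.1 + 1) * gaussBinom p n (kl.1 + 1) * f (kl.1 + 1) kl.2 := by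
    let g (kl : ℕ × ℕ) := p ^ kl.1 * gaussBinom p n kl.1 * f kl.1 kl.2
    have h := (Nat.sum_antidiagonal_succ (n := n) (f := g)).symm.trans Nat.sum_antidiagonal_succ'
    simpa [g, gaussBinom_eq_zero_of_lt] using h.symm
  calc _ = f 0 (n + 1) + ∑ kl ∈ antidiagonal n,
          (p ^ (kl.1 + 1) * gaussBinom p n (kl.1 + 1) * f (kl.1 + 1) kl.2 +
            gaussBinom p n kl.1 * f (kl.1 + 1) kl.2) := by
        simp only [Nat.sum_antidiagonal_succ, gaussBinom_zero_right, gaussBinom_succ_succ,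
          add_mul, one_mul]
    _ = _ := by
        rw [sum_add_distrib, ← add_assoc, ← shift, ← sum_add_distrib]
        exact sum_congr rfl fun _ _ => by ring

theorem sum_antidiagonal_gaussBinom_mul_qSubPow_mul_qSubPow (n : ℕ) (x y z : R) :
    ∑ kl ∈ antidiagonal n, gaussBinom p n kl.1 * (qSubPow p kl.1 x y * qSubPow p kl.2 y z) =
      qSubPow p n x z := by
  induction n with
  | zero => simp
  | succ n ih =>
    rw [sum_antidiagonal_gaussBinom_succ_mul p fun k l => qSubPow p k x y * qSubPow p l y z,
      qSubPow_succ, ← ih, sum_mul]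
    refine sum_congr rfl fun kl hkl => ?_
    rw [← mem_antidiagonal.1 hkl, qSubPow_succ, qSubPow_succ]
    -- `x - p ^ (k + l) z = (x - p ^ k y) + p ^ k (y - p ^ l z)`
    ring

theorem sum_antidiagonal_gaussBinom_mul_gaussBinom_mul_qSubPow (a b n : ℕ) (x : R) :
    ∑ kl ∈ antidiagonal n, gaussBinom p n kl.1 * gaussBinom p (a + b) (a + kl.2) *
        qSubPow p kl.1 x (p ^ b) * qSubPow p kl.2 (p ^ (a + kl.2)) 1 =
      qSubPow p n x 1 * gaussBinom p (a + b) a := by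
  rw [← sum_antidiagonal_gaussBinom_mul_qSubPow_mul_qSubPow p n x (p ^ b) 1, sum_mul]
  refine sum_congr rfl fun kl _ => ?_
  linear_combination gaussBinom p n kl.1 * qSubPow p kl.1 x (p ^ b) *
    gaussBinom_mul_qSubPow p a b kl.2

end CommRing

theorem sq_pow_choose_two {M : Type*} [Monoid M] (x : M) (n : ℕ) :
    (x ^ 2) ^ n.choose 2 = x ^ (n * (n - 1)) := by
  rw [← pow_mul, Nat.choose_two_right, Nat.mul_div_cancel' (Nat.even_mul_pred_self n).two_dvd]

theorem rpow_two_mul_natCast (q : ℝ) (n : ℕ) : q ^ (2 * (n : ℝ)) = (q ^ 2) ^ n := by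
  rw [← pow_mul, ← Real.rpow_natCast, Nat.cast_mul, Nat.cast_ofNat]

theorem skewGamma_two_mul_natCast (q : ℝ) (n k : ℕ) :
    skewGamma q (2 * (n : ℝ)) k = qSubPow (q ^ 2) k ((q ^ 2) ^ n) 1 := by
  simp only [skewGamma, qSubPow, rpow_two_mul_natCast, mul_one]

theorem gaussQ_natCast {q : ℝ} (hq0 : q ≠ 0) (hq1 : q ^ 2 ≠ 1) (n k : ℕ) :
    gaussQ q n k = gaussBinom (q ^ 2) n k := by
  have hden : qSubPow (q ^ 2) k ((q ^ 2) ^ k) 1 ≠ 0 :=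
    qSubPow_pow_one_ne_zero _ (pow_right_injective₀ (by positivity) hq1) le_rfl
  rw [eq_div_of_mul_eq hden (gaussBinom_mul_qSubPow_self (q ^ 2) n k)]
  simp only [gaussQ, qSubPow, rpow_two_mul_natCast, prod_div_distrib, mul_one]

theorem stmt15_general (q : ℝ) (hq0 : q ≠ 0) (hq1 : q ^ 2 ≠ 1) (i φ Λ : ℕ)
    (hi : i ≤ φ) (hΛ : φ ≤ Λ) :
    (∑ ℓ ∈ range (i + 1),
        gaussQ q (i : ℝ) ℓ * gaussQ q ((Λ : ℝ) - (i : ℝ)) (φ - ℓ) * q ^ (2 * ℓ * (Λ - φ)) *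
          (-1 : ℝ) ^ ℓ * q ^ (ℓ * (ℓ - 1)) * skewGamma q (2 * ((φ : ℝ) - (ℓ : ℝ))) (i - ℓ))
      = (-1 : ℝ) ^ i * q ^ (i * (i - 1)) * gaussQ q ((Λ : ℝ) - (i : ℝ)) (Λ - φ) := by
  obtain ⟨a, rfl⟩ := Nat.exists_eq_add_of_le' hi
  obtain ⟨b, rfl⟩ := Nat.exists_eq_add_of_le hΛ
  have hN : ((a + i + b : ℕ) : ℝ) - (i : ℝ) = ((a + b : ℕ) : ℝ) := by push_cast; ring
  have key := sum_antidiagonal_gaussBinom_mul_gaussBinom_mul_qSubPow (q ^ 2) a b i 0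
  rw [qSubPow_zero_left, sq_pow_choose_two, gaussBinom_symm_add] at key
  simp only [hN, Nat.add_sub_cancel_left, gaussQ_natCast hq0 hq1]
  rw [← key, Nat.sum_antidiagonal_eq_sum_range_succ_mk]
  refine sum_congr rfl fun ℓ hℓ => ?_
  have hℓi : ℓ ≤ i := mem_range_succ_iff.1 hℓ
  have hcast : ((a + i : ℕ) : ℝ) - (ℓ : ℝ) = ((a + (i - ℓ) : ℕ) : ℝ) := by
    push_cast [hℓi]; ring
  rw [hcast, skewGamma_two_mul_natCast, qSubPow_zero_left, sq_pow_choose_two,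
    Nat.add_sub_assoc hℓi, neg_pow]
  ring

theorem stmt15 (q : ℝ) (hq : 1 < q) (i φ Λ : ℕ) (hi : i ≤ φ) (hΛ : φ ≤ Λ) :
    (∑ ℓ ∈ Finset.range (i + 1),
        gaussQ q (i : ℝ) ℓ * gaussQ q ((Λ : ℝ) - (i : ℝ)) (φ - ℓ) * q ^ (2 * ℓ * (Λ - φ)) *
          (-1 : ℝ) ^ ℓ * q ^ (ℓ * (ℓ - 1)) * skewGamma q (2 * ((φ : ℝ) - (ℓ : ℝ))) (i - ℓ))
      = (-1 : ℝ) ^ i * q ^ (i * (i - 1)) * gaussQ q ((Λ : ℝ) - (i : ℝ)) (Λ - φ) :=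
  stmt15_general q (zero_lt_one.trans hq).ne' (one_lt_pow₀ hq two_ne_zero).ne' i φ Λ hi hΛ
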